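/- arXiv:2405.17810 — 4 statements merged into one kernel-verified Lean document; each statement's English description precedes it below -/
import Mathlib

section
/- Under hypotheses H(M), H(F), H(G), H(γ), H(Ψ), E ∈ X* and the smallness condition c_F > c_G‖γ‖^p, for every pair of parameters (z, ξ) ∈ K × Y* the solution set S(z,ξ) of Problem 2 is nonempty (and its elements belong to W). Moreover, if F is strictly monotone (⟨F(u) − F(v), u − v⟩_X > 0 whenever u ≠ v), then S(z,ξ) is a singleton. -/
open Filter Topology Bornology Set

noncomputable section

/-- Weak convergence of a sequence in a normed space: convergence tested
against every continuous linear functional. -/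
def WeakConv {V : Type*} [NormedAddCommGroup V] [NormedSpace ℝ V]
    (x : ℕ → V) (x₀ : V) : Prop :=
  ∀ f : V →L[ℝ] ℝ, Tendsto (fun n => f (x n)) atTop (𝓝 (f x₀))

/-- Weak-star convergence of a sequence of continuous linear functionals
(which coincides with weak convergence when the underlying space is reflexive). -/
def WeakStarConv {V : Type*} [NormedAddCommGroup V] [NormedSpace ℝ V]
    (f : ℕ → V →L[ℝ] ℝ) (f₀ : V →L[ℝ] ℝ) : Prop :=
  ∀ v : V, Tendsto (fun n => f n v) atTop (𝓝 (f₀ v))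

/-- Reflexivity of a real normed space, expressed via surjectivity of the
canonical embedding into the double dual. -/
def IsReflexiveSpace (V : Type*) [NormedAddCommGroup V] [NormedSpace ℝ V] : Prop :=
  Function.Surjective ⇑(NormedSpace.inclusionInDoubleDual ℝ V)

/-- Clarke generalized directional derivative of `J` at `u` in direction `v`. -/
def clarkeDD {V : Type*} [NormedAddCommGroup V] [NormedSpace ℝ V]
    (J : V → ℝ) (u v : V) : ℝ :=
  limsup (fun q : V × ℝ => (J (q.1 + q.2 • v) - J q.1) / q.2)
    ((𝓝 u) ×ˢ (𝓝[>] (0 : ℝ)))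

/-- Clarke generalized subdifferential of `J` at `u`. -/
def clarkeSub {V : Type*} [NormedAddCommGroup V] [NormedSpace ℝ V]
    (J : V → ℝ) (u : V) : Set (V →L[ℝ] ℝ) :=
  {g | ∀ v : V, g v ≤ clarkeDD J u v}

/-- The data of the evolution multivalued quasi-variational inequality:
spaces `X`, `Y`, the (unbounded) operator `L` with domain `DL`, the constraint
set `K`, the constraint map `M`, the operator `F`, the multivalued map `G`,
the trace operator `gam`, the bifunction `Psi`, the right-hand side `E`, and
the constants appearing in the hypotheses. -/
structure QVISetting (X Y : Type*) [NormedAddCommGroup X] [NormedSpace ℝ X]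
    [NormedAddCommGroup Y] [NormedSpace ℝ Y] where
  DL : Set X
  L : X → X →L[ℝ] ℝ
  K : Set X
  M : X → Set X
  F : X → X →L[ℝ] ℝ
  G : Y → Set (Y →L[ℝ] ℝ)
  gam : X →L[ℝ] Y
  Psi : X → X → ℝ
  E : X →L[ℝ] ℝ
  p : ℝ
  cF : ℝ
  dF : ℝ
  cG : ℝ
  dG : ℝ
  cPsi : ℝ
  dPsi : ℝ
  ePsi : ℝ
  beta : ℝ

namespace QVISetting

variable {X Y : Type*} [NormedAddCommGroup X] [NormedSpace ℝ X]
  [NormedAddCommGroup Y] [NormedSpace ℝ Y] (S : QVISetting X Y)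

/-- Weak convergence in `W = D(L)` equipped with the graph norm:
weak convergence in `X` together with weak convergence of `L xₙ` in `X*`. -/
def WConvW (x : ℕ → X) (x₀ : X) : Prop :=
  WeakConv x x₀ ∧ WeakStarConv (fun n => S.L (x n)) (S.L x₀)

/-- H(L): `L` is linear on its domain `DL`, densely defined, monotone, and
maximal monotone. -/
def HL : Prop :=
  (0 : X) ∈ S.DL ∧
  (∀ a ∈ S.DL, ∀ b ∈ S.DL, ∀ s t : ℝ,
      s • a + t • b ∈ S.DL ∧ S.L (s • a + t • b) = s • S.L a + t • S.L b) ∧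
  Dense S.DL ∧
  (∀ u ∈ S.DL, ∀ v ∈ S.DL, 0 ≤ (S.L u - S.L v) (u - v)) ∧
  (∀ (x : X) (xs : X →L[ℝ] ℝ),
      (∀ v ∈ S.DL, 0 ≤ (xs - S.L v) (x - v)) → x ∈ S.DL ∧ xs = S.L x)

/-- H(K): `K` is nonempty, closed and convex. -/
def HK : Prop := S.K.Nonempty ∧ IsClosed S.K ∧ Convex ℝ S.K

/-- H(M): `M` has nonempty closed convex values contained in `K`; `0` lies in
the norm-interior of `⋂_{w ∈ K} M w`; `M` has a weakly closed graph with
respect to `L`; and the Mosco-type approximation property holds. -/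
def HM : Prop :=
  (∀ z ∈ S.K, (S.M z).Nonempty ∧ IsClosed (S.M z) ∧ Convex ℝ (S.M z) ∧ S.M z ⊆ S.K) ∧
  (0 : X) ∈ interior (⋂ w ∈ S.K, S.M w) ∧
  (∀ (y x : ℕ → X) (y₀ x₀ : X), (∀ n, y n ∈ S.K) →
      (∀ n, x n ∈ S.M (y n) ∩ S.DL) →
      S.WConvW y y₀ → S.WConvW x x₀ → x₀ ∈ S.M y₀ ∩ S.DL) ∧
  (∀ (y : ℕ → X) (y₀ : X), (∀ n, y n ∈ S.K) → S.WConvW y y₀ →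
      ∀ x₀ ∈ S.M y₀ ∩ S.DL, ∃ x : ℕ → X,
        (∀ n, x n ∈ S.M (y n) ∩ S.DL) ∧ Tendsto x atTop (𝓝 x₀))

/-- H(F): `F` is bounded, monotone, hemicontinuous and `p`-coercive. -/
def HF : Prop :=
  (∀ B : Set X, IsBounded B → IsBounded (S.F '' B)) ∧
  (∀ u v : X, 0 ≤ (S.F u - S.F v) (u - v)) ∧
  (∀ u v w : X, Tendsto (fun t : ℝ => S.F (u + t • v) w) (𝓝 0) (𝓝 (S.F u w))) ∧
  1 < S.p ∧ 0 < S.cF ∧ 0 ≤ S.dF ∧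
  (∀ x : X, S.cF * ‖x‖ ^ S.p - S.dF ≤ S.F x x)

/-- H(G): `G` has nonempty closed convex values, sequentially strongly–weakly
closed graph, and satisfies the `(p-1)`-growth condition. -/
def HG : Prop :=
  (∀ z : Y, (S.G z).Nonempty ∧ IsClosed (S.G z) ∧ Convex ℝ (S.G z)) ∧
  (∀ (z : ℕ → Y) (z₀ : Y) (ξ : ℕ → Y →L[ℝ] ℝ) (ξ₀ : Y →L[ℝ] ℝ),
      Tendsto z atTop (𝓝 z₀) → (∀ n, ξ n ∈ S.G (z n)) →
      WeakStarConv ξ ξ₀ → ξ₀ ∈ S.G z₀) ∧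
  0 ≤ S.cG ∧ 0 ≤ S.dG ∧
  (∀ z : Y, ∀ ξ ∈ S.G z, ‖ξ‖ ≤ S.cG * ‖z‖ ^ (S.p - 1) + S.dG)

/-- H(γ): `gam` is compact on `W`: it maps weakly convergent sequences in `W`
to strongly convergent sequences in `Y`. -/
def Hgam : Prop :=
  ∀ (x : ℕ → X) (x₀ : X), S.WConvW x x₀ →
    Tendsto (fun n => S.gam (x n)) atTop (𝓝 (S.gam x₀))

/-- H(Ψ): conditions (i)–(iv) on the bifunction `Psi`. -/
def HPsi : Prop :=
  (∀ x : X, ConvexOn ℝ Set.univ (S.Psi x) ∧ LowerSemicontinuous (S.Psi x)) ∧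
  (∃ (η : ℝ) (b : X → X → X → ℝ), 0 < η ∧ η < S.p ∧
    (∀ a u v : X, 0 ≤ b a u v) ∧
    (∀ A B C : Set X, IsBounded A → IsBounded B → IsBounded C →
        ∃ Cb : ℝ, ∀ a ∈ A, ∀ u ∈ B, ∀ v ∈ C, b a u v ≤ Cb) ∧
    (∀ x y₁ y₂ : X, S.Psi x y₁ - S.Psi x y₂ ≤ b x y₁ y₂ * ‖y₁ - y₂‖ ^ η) ∧
    (∀ B : Set X, IsBounded B → ∀ ε > (0 : ℝ), ∃ R : ℝ, ∀ z ∈ B, ∀ x : X,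
        R ≤ ‖x‖ → b z 0 x / ‖x‖ ^ (S.p - η) ≤ ε)) ∧
  (∀ (w x y : ℕ → X) (w₀ x₀ y₀ : X),
      S.WConvW w w₀ → S.WConvW x x₀ → Tendsto y atTop (𝓝 y₀) →
      limsup (fun n => S.Psi (w n) (y n) - S.Psi (w n) (x n)) atTop ≤
        S.Psi w₀ y₀ - S.Psi w₀ x₀) ∧
  (∀ v : X, ∃ g : X →L[ℝ] ℝ, ∀ y : X, S.Psi v 0 + g y ≤ S.Psi v y) ∧
  (0 ≤ S.ePsi ∧ ∀ v : X, |S.Psi v 0| ≤ S.ePsi) ∧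
  (0 ≤ S.cPsi ∧ 0 ≤ S.dPsi ∧ 1 ≤ S.beta ∧ S.beta < S.p ∧
    ∀ v y : X, -S.cPsi * ‖y‖ ^ S.beta - S.dPsi ≤ S.Psi v y)

/-- The `(S₊)`-property of `F` with respect to `L`. -/
def SPlus : Prop :=
  ∀ (x : ℕ → X) (x₀ : X), S.WConvW x x₀ →
    limsup (fun n => S.F (x n) (x n - x₀)) atTop ≤ 0 →
    Tendsto x atTop (𝓝 x₀)

/-- Strict monotonicity of `F`. -/
def StrictlyMonotoneF : Prop :=
  ∀ u v : X, u ≠ v → 0 < (S.F u - S.F v) (u - v)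

/-- Solution set of Problem 1. -/
def Sol1 : Set X :=
  {x | x ∈ S.M x ∩ S.DL ∧ ∃ ξ ∈ S.G (S.gam x), ∀ y ∈ S.M x ∩ S.DL,
      S.Psi x x - S.Psi x y ≤
        S.L x (y - x) + S.F x (y - x) - S.E (y - x) + ξ (S.gam (y - x))}

/-- Solution set of Problem 2 with parameters `(z, ξ)`. -/
def Sol2 (z : X) (ξ : Y →L[ℝ] ℝ) : Set X :=
  {x | x ∈ S.M z ∩ S.DL ∧ ∀ y ∈ S.M z ∩ S.DL,
      S.Psi z x - S.Psi z y ≤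
        S.L x (y - x) + S.F x (y - x) - S.E (y - x) + ξ (S.gam (y - x))}

/-- Solution set of Problem 3 (with `G = ∂_C J ∘ γ`). -/
def Sol3 (J : Y → ℝ) : Set X :=
  {x | x ∈ S.M x ∩ S.DL ∧ ∃ ξ ∈ clarkeSub J (S.gam x), ∀ y ∈ S.M x ∩ S.DL,
      S.Psi x x - S.Psi x y ≤
        S.L x (y - x) + S.F x (y - x) - S.E (y - x) + ξ (S.gam (y - x))}

/-- Solution set of Problem 4 (quasi-variational–hemivariational inequality). -/
def Sol4 (J : Y → ℝ) : Set X :=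
  {x | x ∈ S.M x ∩ S.DL ∧ ∀ y ∈ S.M x ∩ S.DL,
      S.Psi x x - S.Psi x y ≤
        S.L x (y - x) + S.F x (y - x) - S.E (y - x) +
          clarkeDD J (S.gam x) (S.gam (y - x))}

/-- Solution set of Problem 5 with a real-valued convex function `Φ`
independent of the first variable. -/
def Sol5 (Φ : X → ℝ) : Set X :=
  {x | x ∈ S.M x ∩ S.DL ∧ ∃ ξ ∈ S.G (S.gam x), ∀ y ∈ S.M x ∩ S.DL,
      Φ x - Φ y ≤
        S.L x (y - x) + S.F x (y - x) - S.E (y - x) + ξ (S.gam (y - x))}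

/-- Solution set of Problem 5 with an extended-real-valued function `Φ`. -/
def Sol5E (Φ : X → EReal) : Set X :=
  {x | x ∈ S.M x ∩ S.DL ∧ ∃ ξ ∈ S.G (S.gam x), ∀ y ∈ S.M x ∩ S.DL,
      Φ x ≤
        ((S.L x (y - x) + S.F x (y - x) - S.E (y - x) + ξ (S.gam (y - x)) : ℝ) : EReal)
          + Φ y}

/-- Sequential weak compactness of a set in `W`. -/
def SeqWeakCompactW (A : Set X) : Prop :=
  ∀ x : ℕ → X, (∀ n, x n ∈ A) →
    ∃ x₀ ∈ A, ∃ φ : ℕ → ℕ, StrictMono φ ∧ S.WConvW (x ∘ φ) x₀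

end QVISetting


theorem minty_fin {X ι : Type*} [NormedAddCommGroup X] [NormedSpace ℝ X] [Fintype ι]
    {D : Set X} (hD : Convex ℝ D) (hne : D.Nonempty) (y : ι → X) (hy : ∀ i, y i ∈ D)
    (T : X → X →L[ℝ] ℝ) (hT : ∀ u ∈ D, ∀ v ∈ D, 0 ≤ (T u - T v) (u - v))
    {Φ : X → ℝ} (hΦ : ConvexOn ℝ univ Φ) {ε : ℝ} (hε : 0 < ε) :
    ∃ x ∈ D, ∀ i, -ε < T (y i) (y i - x) + Φ (y i) - Φ x := by
  classical
  by_contra hcon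
  set φ : ι → X → ℝ := fun i x => T (y i) (y i - x) + Φ (y i) - Φ x with hφ
  set A : Set (ι → ℝ) := {v | ∃ x ∈ D, ∀ i, v i < φ i x} with hA
  have hAopen : IsOpen A := by
    have : A = ⋃ x ∈ D, Set.pi univ (fun i => Iio (φ i x)) := by
      ext v; simp [hA]
    rw [this]
    exact isOpen_biUnion fun x _ => isOpen_set_pi finite_univ fun i _ => isOpen_Iio
  have hAconv : Convex ℝ A := by
    rintro v ⟨x, hx, hv⟩ w ⟨x', hx', hw⟩ a b ha hb hab
    refine ⟨a • x + b • x', hD hx hx' ha hb hab, fun i => ?_⟩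
    have h1 := hΦ.2 (mem_univ x) (mem_univ x') ha hb hab
    have h2 : T (y i) (y i - (a • x + b • x')) =
        a * T (y i) (y i - x) + b * T (y i) (y i - x') := by
      simp only [map_sub, map_add, map_smul, smul_eq_mul]
      linear_combination (-(T (y i)) (y i)) * hab
    have h3 : a * v i + b * w i < a * φ i x + b * φ i x' := by
      rcases ha.eq_or_lt with h | h
      · have : 0 < b := by linarith
        have := mul_lt_mul_of_pos_left (hw i) this
        subst h; linarith
      · have := mul_lt_mul_of_pos_left (hv i) h
        have := mul_le_mul_of_nonneg_left (hw i).le hb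
        linarith
    have h4 : a * φ i x + b * φ i x' ≤ φ i (a • x + b • x') := by
      simp only [hφ, h2]
      simp only [smul_eq_mul] at h1
      have : a * Φ (y i) + b * Φ (y i) = Φ (y i) := by rw [← add_mul, hab, one_mul]
      linarith
    simpa using h3.trans_le h4
  have hnot : (fun _ => -ε : ι → ℝ) ∉ A := by
    rintro ⟨x, hx, h⟩
    exact hcon ⟨x, hx, h⟩
  obtain ⟨f, hf⟩ := geometric_hahn_banach_open_point hAconv hAopen hnot
  set lam : ι → ℝ := fun i => f (Pi.single i 1) with hlam
  have hfv : ∀ v : ι → ℝ, f v = ∑ i, lam i * v i := by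
    intro v
    conv_lhs => rw [← Finset.univ_sum_single v]
    rw [map_sum]
    refine Finset.sum_congr rfl fun i _ => ?_
    have : (Pi.single i (v i) : ι → ℝ) = v i • Pi.single i 1 := by
      rw [← Pi.single_smul]; simp
    rw [this, map_smul, smul_eq_mul, mul_comm]
  obtain ⟨x₁, hx₁⟩ := hne
  have hlam0 : ∀ i, 0 ≤ lam i := by
    intro i
    by_contra hneg
    push Not at hneg
    -- go down along -e_i
    set v₀ : ι → ℝ := fun j => φ j x₁ - 1
    set c := f (fun _ => -ε)
    have key : ∀ r : ℝ, 0 ≤ r → f v₀ - r * lam i < c := by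
      intro r hr
      have hm : v₀ - r • Pi.single i 1 ∈ A := by
        refine ⟨x₁, hx₁, fun j => ?_⟩
        have : 0 ≤ r * (Pi.single i 1 : ι → ℝ) j := by
          refine mul_nonneg hr ?_
          by_cases h : j = i
          · subst h; simp
          · simp [h]
        simp only [Pi.sub_apply, Pi.smul_apply, smul_eq_mul, v₀]
        linarith
      have := hf _ hm
      rw [map_sub, map_smul, smul_eq_mul] at this
      exact this
    have := key (|c - f v₀| / (-lam i)) (by apply div_nonneg (abs_nonneg _); linarith)
    have h5 : |c - f v₀| / (-lam i) * lam i = -|c - f v₀| := by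
      have := hneg.ne
      field_simp
    rw [h5] at this
    have := le_abs_self (c - f v₀)
    linarith
  have hpos : 0 < ∑ i, lam i := by
    rcases (Finset.sum_nonneg fun i (_ : i ∈ Finset.univ) => hlam0 i).eq_or_lt with h | h
    · exfalso
      have h0 : ∀ i, lam i = 0 := fun i =>
        (Finset.sum_eq_zero_iff_of_nonneg fun i _ => hlam0 i).1 h.symm i (Finset.mem_univ i)
      have := hf (fun j => φ j x₁ - 1) ⟨x₁, hx₁, fun j => by linarith⟩
      rw [hfv, hfv] at this
      simp [h0] at this
    · exact h
  set σ := ∑ i, lam i with hσ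
  set μ : ι → ℝ := fun i => lam i / σ with hμ
  have hμ0 : ∀ i, 0 ≤ μ i := fun i => div_nonneg (hlam0 i) hpos.le
  have hμ1 : ∑ i, μ i = 1 := by
    simp only [hμ]; rw [← Finset.sum_div]; exact div_self hpos.ne'
  set xb : X := ∑ i, μ i • y i with hxb
  have hxbD : xb ∈ D := hD.sum_mem (fun i _ => hμ0 i) hμ1 (fun i _ => hy i)
  have hJ : Φ xb ≤ ∑ i, μ i * Φ (y i) := by
    simpa using hΦ.map_sum_le (fun i _ => hμ0 i) hμ1 (fun i _ => mem_univ (y i))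
  have hmono : 0 ≤ ∑ i, μ i * T (y i) (y i - xb) := by
    have e1 : ∀ i, T (y i) (y i - xb) = ∑ j, μ j * T (y i) (y i - y j) := by
      intro i
      simp only [map_sub, mul_sub, Finset.sum_sub_distrib, ← Finset.sum_mul, hμ1, one_mul]
      simp [hxb, map_sum]
    have e2 : ∑ i, μ i * T (y i) (y i - xb) = ∑ i, ∑ j, μ i * μ j * T (y i) (y i - y j) := by
      refine Finset.sum_congr rfl fun i _ => ?_
      rw [e1, Finset.mul_sum]
      exact Finset.sum_congr rfl fun j _ => by ring
    have e3 : ∑ i, ∑ j, μ i * μ j * T (y i) (y i - y j)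
        = ∑ i, ∑ j, μ i * μ j * T (y j) (y j - y i) := by
      rw [Finset.sum_comm]
      refine Finset.sum_congr rfl fun i _ => Finset.sum_congr rfl fun j _ => by ring
    have e4 : 0 ≤ ∑ i, ∑ j, μ i * μ j * T (y i) (y i - y j)
        + ∑ i, ∑ j, μ i * μ j * T (y j) (y j - y i) := by
      rw [← Finset.sum_add_distrib]
      refine Finset.sum_nonneg fun i _ => ?_
      rw [← Finset.sum_add_distrib]
      refine Finset.sum_nonneg fun j _ => ?_
      have h := mul_nonneg (mul_nonneg (hμ0 i) (hμ0 j)) (hT _ (hy i) _ (hy j))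
      have : (T (y i) - T (y j)) (y i - y j) = T (y i) (y i - y j) + T (y j) (y j - y i) := by
        simp only [sub_apply, map_sub]; ring
      rw [this] at h
      linarith
    rw [e2]; linarith
  have hsum : 0 ≤ ∑ i, μ i * φ i xb := by
    have : ∑ i, μ i * φ i xb = ∑ i, μ i * T (y i) (y i - xb) + ∑ i, μ i * Φ (y i) - Φ xb := by
      simp only [hφ, mul_sub, mul_add, Finset.sum_sub_distrib, Finset.sum_add_distrib,
        ← Finset.sum_mul, hμ1, one_mul]
    rw [this]; linarith
  have hlast := hf (fun j => φ j xb - ε) ⟨xb, hxbD, fun j => by linarith⟩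
  rw [hfv, hfv] at hlast
  have h6 : ∑ i, lam i * φ i xb = σ * ∑ i, μ i * φ i xb := by
    rw [Finset.mul_sum]
    refine Finset.sum_congr rfl fun i _ => ?_
    simp only [hμ]; field_simp
  have h7 : ∑ i, lam i * (φ i xb - ε) = ∑ i, lam i * φ i xb + ∑ i, lam i * -ε := by
    rw [← Finset.sum_add_distrib]
    exact Finset.sum_congr rfl fun i _ => by ring
  rw [h7, h6] at hlast
  have := mul_nonneg hpos.le hsum
  linarith

theorem minty_cpt {X : Type*} [NormedAddCommGroup X] [NormedSpace ℝ X]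
    {D : Set X} (hD : Convex ℝ D) (hne : D.Nonempty) (hc : IsCompact D)
    (T : X → X →L[ℝ] ℝ) (hT : ∀ u ∈ D, ∀ v ∈ D, 0 ≤ (T u - T v) (u - v))
    {Φ : X → ℝ} (hΦ : ConvexOn ℝ univ Φ) (hΦc : Continuous Φ) :
    ∃ x ∈ D, ∀ y ∈ D, 0 ≤ T y (y - x) + Φ y - Φ x := by
  classical
  have := hc.inter_iInter_nonempty
    (fun q : D × {e : ℝ // 0 < e} => {x | -(q.2 : ℝ) ≤ T q.1 (q.1 - x) + Φ q.1 - Φ x})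
    (fun q => isClosed_le continuous_const (by fun_prop))
    (fun u => by
      by_cases hu : u.Nonempty
      · set ε := u.inf' hu (fun q => (q.2 : ℝ)) with hε
        have hεpos : 0 < ε := (Finset.lt_inf'_iff hu).2 fun q _ => q.2.2
        obtain ⟨x, hx, h⟩ := minty_fin hD hne (fun q : u => (q.1.1 : X)) (fun q => q.1.1.2)
          T hT hΦ hεpos
        refine ⟨x, hx, mem_iInter₂.2 fun q hq => ?_⟩
        have h1 := h ⟨q, hq⟩
        have h2 : ε ≤ q.2 := Finset.inf'_le (fun q : D × {e : ℝ // 0 < e} => (q.2 : ℝ)) hq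
        simp only [mem_ofPred_eq]
        dsimp at h1
        linarith
      · obtain ⟨x, hx⟩ := hne
        rw [Finset.not_nonempty_iff_eq_empty] at hu
        exact ⟨x, hx, by simp [hu]⟩)
  obtain ⟨x, hx, h⟩ := this
  refine ⟨x, hx, fun y hy => ?_⟩
  refine le_of_forall_pos_le_add fun e he => ?_
  have := mem_iInter.1 h (⟨y, hy⟩, ⟨e, he⟩)
  simp only [mem_ofPred_eq] at this
  linarith

theorem minty_to_stamp {X : Type*} [NormedAddCommGroup X] [NormedSpace ℝ X]
    {D : Set X} (hD : Convex ℝ D)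
    (T : X → X →L[ℝ] ℝ) {Φ : X → ℝ} (hΦ : ConvexOn ℝ univ Φ)
    (hh : ∀ x ∈ D, ∀ y ∈ D,
      Tendsto (fun t : ℝ => T (x + t • (y - x)) (y - x)) (𝓝[>] 0) (𝓝 (T x (y - x))))
    {x : X} (hx : x ∈ D) (h : ∀ y ∈ D, 0 ≤ T y (y - x) + Φ y - Φ x) :
    ∀ y ∈ D, 0 ≤ T x (y - x) + Φ y - Φ x := by
  intro y hy
  have h1 : Tendsto (fun t : ℝ => T (x + t • (y - x)) (y - x) + Φ y - Φ x) (𝓝[>] 0)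
      (𝓝 (T x (y - x) + Φ y - Φ x)) :=
    ((hh x hx y hy).add_const _).sub_const _
  refine ge_of_tendsto h1 ?_
  filter_upwards [Ioo_mem_nhdsGT (zero_lt_one (α := ℝ))] with t ht
  have hmem : x + t • (y - x) ∈ D := hD.add_smul_sub_mem hx hy ⟨ht.1.le, ht.2.le⟩
  have h2 := h _ hmem
  have h3 := hΦ.2 (mem_univ x) (mem_univ y) (by linarith [ht.2] : 0 ≤ 1 - t) ht.1.le (by ring)
  have h4 : (1 - t) • x + t • y = x + t • (y - x) := by module
  rw [h4] at h3
  simp only [smul_eq_mul] at h3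
  rw [add_sub_cancel_left, map_smul, smul_eq_mul] at h2
  have h5 : 0 ≤ t * (T (x + t • (y - x)) (y - x) + Φ y - Φ x) := by linarith
  exact nonneg_of_mul_nonneg_right h5 ht.1

theorem alaoglu {V ι : Type*} [NormedAddCommGroup V] [NormedSpace ℝ V] (U : Ultrafilter ι)
    (g : ι → V →L[ℝ] ℝ) {R : ℝ} (hg : ∀ i, ‖g i‖ ≤ R) :
    ∃ g₀ : V →L[ℝ] ℝ, ∀ v, Tendsto (fun i => g i v) U (𝓝 (g₀ v)) := by
  have hc := WeakDual.isCompact_closedBall (𝕜 := ℝ) (0 : StrongDual ℝ V) R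
  have hU : ((U.map (fun i => StrongDual.toWeakDual (g i))) : Filter (WeakDual ℝ V)) ≤
      𝓟 (WeakDual.toStrongDual ⁻¹' Metric.closedBall (0 : StrongDual ℝ V) R) := by
    rw [le_principal_iff]
    refine Filter.mem_map.2 (Filter.univ_mem' fun i => ?_)
    have := hg i
    show WeakDual.toStrongDual (StrongDual.toWeakDual (g i)) ∈ Metric.closedBall 0 R
    rw [mem_closedBall_zero_iff]
    exact this
  obtain ⟨g₀, -, h⟩ := hc.ultrafilter_le_nhds _ hU
  refine ⟨WeakDual.toStrongDual g₀, fun v => ?_⟩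
  exact ((WeakDual.eval_continuous v).tendsto g₀).comp h

theorem weak_cpt {X ι : Type*} [NormedAddCommGroup X] [NormedSpace ℝ X]
    (hrefl : Function.Surjective ⇑(NormedSpace.inclusionInDoubleDual ℝ X)) (U : Ultrafilter ι)
    (x : ι → X) {R : ℝ} (hx : ∀ i, ‖x i‖ ≤ R) :
    ∃ x₀ : X, ∀ g : X →L[ℝ] ℝ, Tendsto (fun i => g (x i)) U (𝓝 (g x₀)) := by
  obtain ⟨g₀, h⟩ := alaoglu U (fun i => NormedSpace.inclusionInDoubleDual ℝ X (x i)) (R := R)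
    (fun i => (NormedSpace.double_dual_bound ℝ X (x i)).trans (hx i))
  obtain ⟨x₀, rfl⟩ := hrefl g₀
  exact ⟨x₀, h⟩

theorem weak_closed {X ι : Type*} [NormedAddCommGroup X] [NormedSpace ℝ X]
    {U : Filter ι} [U.NeBot] {x : ι → X} {x₀ : X}
    (h : ∀ g : X →L[ℝ] ℝ, Tendsto (fun i => g (x i)) U (𝓝 (g x₀)))
    {C : Set X} (hC : Convex ℝ C) (hcl : IsClosed C) (hx : ∀ᶠ i in U, x i ∈ C) : x₀ ∈ C := by
  by_contra hn
  obtain ⟨g, u, h1, h2⟩ := geometric_hahn_banach_closed_point hC hcl hn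
  have := le_of_tendsto (h g) (hx.mono fun i hi => (h1 _ hi).le)
  linarith

theorem weak_lsc {X ι : Type*} [NormedAddCommGroup X] [NormedSpace ℝ X]
    {U : Filter ι} [U.NeBot] {x : ι → X} {x₀ : X}
    (h : ∀ g : X →L[ℝ] ℝ, Tendsto (fun i => g (x i)) U (𝓝 (g x₀)))
    {Φ : X → ℝ} (hΦ : ConvexOn ℝ univ Φ) (hΦc : Continuous Φ)
    {r : ι → ℝ} {r₀ : ℝ} (hr : Tendsto r U (𝓝 r₀)) (hle : ∀ᶠ i in U, Φ (x i) ≤ r i) :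
    Φ x₀ ≤ r₀ := by
  refine le_of_forall_pos_le_add fun e he => ?_
  have hcv : Convex ℝ {y | Φ y ≤ r₀ + e} := by
    simpa using hΦ.convex_le (r₀ + e)
  refine weak_closed h hcv (isClosed_le hΦc continuous_const) ?_
  filter_upwards [hle, hr.eventually (gt_mem_nhds (show r₀ < r₀ + e by linarith))] with i h1 h2
  exact h1.trans h2.le

theorem sandwich {X : Type*} [NormedAddCommGroup X] [NormedSpace ℝ X]
    {DL : Set X} {L : X → X →L[ℝ] ℝ} (h0 : (0 : X) ∈ DL)
    (hlin : ∀ a ∈ DL, ∀ b ∈ DL, ∀ s t : ℝ,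
      s • a + t • b ∈ DL ∧ L (s • a + t • b) = s • L a + t • L b)
    (hmon : ∀ u ∈ DL, ∀ v ∈ DL, 0 ≤ (L u - L v) (u - v))
    {C : Set X} (hC : Convex ℝ C) (hi : (0 : X) ∈ interior C)
    {Φ : X → ℝ} (hΦ : ConvexOn ℝ univ Φ) (hΦc : Continuous Φ) (q : X →L[ℝ] ℝ) {x : X}
    (hx : x ∈ C) (h : ∀ y ∈ C ∩ DL, 0 ≤ (L y + q) (y - x) + Φ y - Φ x) :
    ∃ g : X →L[ℝ] ℝ, ∀ y ∈ DL, 0 ≤ (L y - g) (y - x) := by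
  set A : Set (X × ℝ) := {w | w.1 ∈ interior C ∧ Φ w.1 - Φ x < w.2} with hA
  set B : Set (X × ℝ) := {w | w.1 ∈ DL ∧ w.2 ≤ -((L w.1 + q) (w.1 - x))} with hB
  have hAo : IsOpen A :=
    (isOpen_interior.preimage continuous_fst).inter
      (isOpen_lt (by fun_prop) continuous_snd)
  have hAc : Convex ℝ A := by
    rintro ⟨u, s⟩ ⟨hu, hs⟩ ⟨v, t⟩ ⟨hv, ht⟩ a b ha hb hab
    refine ⟨hC.interior hu hv ha hb hab, ?_⟩
    have h1 := hΦ.2 (mem_univ u) (mem_univ v) ha hb hab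
    simp only [smul_eq_mul] at h1 hs ht
    show Φ (a • u + b • v) - Φ x < a * s + b * t
    have h3 : a * (Φ u - Φ x) + b * (Φ v - Φ x) < a * s + b * t := by
      rcases ha.eq_or_lt with h | h
      · have : 0 < b := by linarith
        have := mul_lt_mul_of_pos_left ht this
        subst h; linarith
      · have := mul_lt_mul_of_pos_left hs h
        have := mul_le_mul_of_nonneg_left ht.le hb
        linarith
    have : a * Φ x + b * Φ x = Φ x := by rw [← add_mul, hab, one_mul]
    linarith
  have hBc : Convex ℝ B := by
    rintro ⟨u, s⟩ ⟨hu, hs⟩ ⟨v, t⟩ ⟨hv, ht⟩ a b ha hb hab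
    refine ⟨(hlin u hu v hv a b).1, ?_⟩
    show a * s + b * t ≤ -((L (a • u + b • v) + q) (a • u + b • v - x))
    rw [(hlin u hu v hv a b).2]
    have h1 := mul_le_mul_of_nonneg_left hs ha
    have h2 := mul_le_mul_of_nonneg_left ht hb
    have h3 := mul_nonneg (mul_nonneg ha hb) (hmon u hu v hv)
    simp only [add_apply, sub_apply, smul_apply, map_add, map_sub, map_smul, smul_eq_mul]
      at h1 h2 h3 ⊢
    have hb' : b = 1 - a := by linarith
    subst hb'
    nlinarith
  have hdis : Disjoint A B := by
    rw [Set.disjoint_left]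
    rintro ⟨y, t⟩ ⟨hy, ht⟩ ⟨hy', ht'⟩
    have := h y ⟨interior_subset hy, hy'⟩
    dsimp only at ht ht'
    linarith
  obtain ⟨f, u, hfa, hfb⟩ := geometric_hahn_banach_open hAc hAo hBc hdis
  set g : X →L[ℝ] ℝ := f.comp (ContinuousLinearMap.inl ℝ X ℝ) with hg
  set s : ℝ := f (0, 1) with hs
  have hf : ∀ y t, f (y, t) = g y + s * t := by
    intro y t
    have : ((y, t) : X × ℝ) = (y, 0) + t • (0, 1) := by simp
    rw [this, map_add, map_smul, smul_eq_mul, mul_comm]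
    simp [hg, hs]
  have hsneg : s < 0 := by
    by_contra hn
    push Not at hn
    set t' := -((L 0 + q) (0 - x))
    set t := max t' (Φ 0 - Φ x + 1)
    have h1 := hfa (0, t) ⟨hi, by
      have : Φ 0 - Φ x + 1 ≤ t := le_max_right _ _
      show Φ 0 - Φ x < t
      linarith⟩
    have h2 := hfb (0, t') ⟨h0, le_rfl⟩
    rw [hf] at h1 h2
    have : s * t' ≤ s * t := mul_le_mul_of_nonneg_left (le_max_left _ _) hn
    linarith
  have hgx : g x ≤ u := by
    have hc : Continuous (fun τ : ℝ => g (τ • x) + s * (Φ (τ • x) - Φ x + (1 - τ))) := by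
      fun_prop
    have ht : Tendsto (fun τ : ℝ => g (τ • x) + s * (Φ (τ • x) - Φ x + (1 - τ))) (𝓝[<] 1)
        (𝓝 (g x)) := by
      have := hc.tendsto 1
      simp only [one_smul, sub_self, add_zero, mul_zero] at this
      exact this.mono_left nhdsWithin_le_nhds
    refine le_of_tendsto ht ?_
    filter_upwards [Ioo_mem_nhdsLT (zero_lt_one (α := ℝ))] with τ hτ
    have hm : τ • x ∈ interior C := by
      have := hC.combo_interior_self_mem_interior hi hx (a := 1 - τ) (b := τ)
        (by linarith [hτ.2]) hτ.1.le (by ring)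
      simpa using this
    have := hfa (τ • x, Φ (τ • x) - Φ x + (1 - τ)) ⟨hm, by
      show Φ (τ • x) - Φ x < Φ (τ • x) - Φ x + (1 - τ)
      linarith [hτ.2]⟩
    rw [hf] at this
    exact this.le
  refine ⟨s⁻¹ • g - q, fun y hy => ?_⟩
  have h1 := hfb (y, -((L y + q) (y - x))) ⟨hy, le_rfl⟩
  rw [hf] at h1
  have h2 : 0 ≤ (-s) * ((L y - (s⁻¹ • g - q)) (y - x)) := by
    have e : (L y - (s⁻¹ • g - q)) (y - x) = (L y + q) (y - x) - s⁻¹ * (g y - g x) := by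
      simp only [add_apply, sub_apply, smul_apply, map_sub, smul_eq_mul]; ring
    rw [e]
    have e2 : -s * ((L y + q) (y - x) - s⁻¹ * (g y - g x)) =
        s * -((L y + q) (y - x)) + (g y - g x) := by
      have := hsneg.ne
      field_simp
      ring
    rw [e2]; linarith
  exact nonneg_of_mul_nonneg_right h2 (by linarith)

theorem exists_bdd {X : Type*} [NormedAddCommGroup X] [NormedSpace ℝ X]
    (hrefl : Function.Surjective ⇑(NormedSpace.inclusionInDoubleDual ℝ X))
    {DL : Set X} {L : X → X →L[ℝ] ℝ} (h0 : (0 : X) ∈ DL)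
    (hlin : ∀ a ∈ DL, ∀ b ∈ DL, ∀ s t : ℝ,
      s • a + t • b ∈ DL ∧ L (s • a + t • b) = s • L a + t • L b)
    (hmon : ∀ u ∈ DL, ∀ v ∈ DL, 0 ≤ (L u - L v) (u - v))
    (hmax : ∀ (x : X) (xs : X →L[ℝ] ℝ),
      (∀ v ∈ DL, 0 ≤ (xs - L v) (x - v)) → x ∈ DL ∧ xs = L x)
    {C : Set X} (hC : Convex ℝ C) (hcl : IsClosed C) (hi : (0 : X) ∈ interior C)
    {R : ℝ} (hR : ∀ x ∈ C, ‖x‖ ≤ R)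
    {F : X → X →L[ℝ] ℝ} {R' : ℝ} (hFb : ∀ x ∈ C, ‖F x‖ ≤ R')
    (hFm : ∀ u v : X, 0 ≤ (F u - F v) (u - v))
    (hFh : ∀ u v w : X, Tendsto (fun t : ℝ => F (u + t • v) w) (𝓝 0) (𝓝 (F u w)))
    (f : X →L[ℝ] ℝ)
    {Φ : X → ℝ} (hΦ : ConvexOn ℝ univ Φ) (hΦc : Continuous Φ) :
    ∃ x ∈ C ∩ DL, ∀ y ∈ C ∩ DL, 0 ≤ (L x + F x - f) (y - x) + Φ y - Φ x := by
  classical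
  set T : X → X →L[ℝ] ℝ := fun x => L x + F x - f with hTdef
  set D : Set X := C ∩ DL with hDdef
  have hDLc : Convex ℝ DL := fun u hu v hv a b _ _ _ => (hlin u hu v hv a b).1
  have hDc : Convex ℝ D := hC.inter hDLc
  have h0D : (0 : X) ∈ D := ⟨interior_subset hi, h0⟩
  have hTm : ∀ u ∈ D, ∀ v ∈ D, 0 ≤ (T u - T v) (u - v) := by
    intro u hu v hv
    have h1 := hmon u hu.2 v hv.2
    have h2 := hFm u v
    simp only [hTdef, add_apply, sub_apply] at h1 h2 ⊢
    linarith
  have hTh : ∀ x ∈ D, ∀ y ∈ D,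
      Tendsto (fun t : ℝ => T (x + t • (y - x)) (y - x)) (𝓝[>] 0) (𝓝 (T x (y - x))) := by
    intro x hx y hy
    have e : ∀ t : ℝ, T (x + t • (y - x)) (y - x) =
        L x (y - x) + t * (L y - L x) (y - x) + F (x + t • (y - x)) (y - x) - f (y - x) := by
      intro t
      have e1 : x + t • (y - x) = (1 - t) • x + t • y := by module
      have e2 : L (x + t • (y - x)) = (1 - t) • L x + t • L y := by
        rw [e1]; exact (hlin x hx.2 y hy.2 _ _).2
      simp only [hTdef, e2, add_apply, sub_apply, smul_apply, smul_eq_mul]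
      ring
    have h1 : Tendsto (fun t : ℝ => L x (y - x) + t * (L y - L x) (y - x)) (𝓝 0)
        (𝓝 (L x (y - x))) := by
      have : Continuous (fun t : ℝ => L x (y - x) + t * (L y - L x) (y - x)) := by fun_prop
      simpa using this.tendsto 0
    have h2 := ((h1.add (hFh x (y - x) (y - x))).sub_const (f (y - x))).mono_left
      (nhdsWithin_le_nhds (s := Ioi 0))
    simp only [e]
    exact h2
  -- Galerkin step
  have gal : ∀ s : Finset D, ∃ x ∈ D, ∀ y : D, y ∈ s → 0 ≤ T x (y - x) + Φ y - Φ x := by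
    intro s
    set H : Set X := convexHull ℝ (insert 0 ((fun y : D => (y : X)) '' (s : Set D))) with hH
    have hfin : (insert 0 ((fun y : D => (y : X)) '' (s : Set D))).Finite :=
      (s.finite_toSet.image _).insert _
    have hHc : IsCompact H := hfin.isCompact_convexHull ℝ
    have hHv : Convex ℝ H := convex_convexHull ℝ _
    have hHD : H ⊆ D := by
      refine convexHull_min ?_ hDc
      rintro w (rfl | ⟨y, -, rfl⟩)
      · exact h0D
      · exact y.2
    have hHne : H.Nonempty := ⟨0, subset_convexHull ℝ _ (mem_insert _ _)⟩
    obtain ⟨x, hx, hxm⟩ := minty_cpt hHv hHne hHc T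
      (fun u hu v hv => hTm u (hHD hu) v (hHD hv)) hΦ hΦc
    refine ⟨x, hHD hx, fun y hy => ?_⟩
    exact minty_to_stamp hHv T hΦ (fun a ha b hb => hTh a (hHD ha) b (hHD hb)) hx hxm y
      (subset_convexHull ℝ _ (mem_insert_of_mem _ ⟨y, hy, rfl⟩))
  choose xs hxsD hxs using gal
  set U : Ultrafilter (Finset D) := Ultrafilter.of atTop with hU
  have hUle : (U : Filter (Finset D)) ≤ atTop := Ultrafilter.of_le _
  obtain ⟨x, hx⟩ := weak_cpt hrefl U xs (R := R) (fun s => hR _ (hxsD s).1)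
  obtain ⟨χ, hχ⟩ := alaoglu U (fun s => F (xs s)) (R := R') (fun s => hFb _ (hxsD s).1)
  have hev : ∀ y : D, ∀ᶠ s in (U : Filter (Finset D)), 0 ≤ T (xs s) (y - xs s) + Φ y - Φ (xs s) := by
    intro y
    refine hUle ?_
    filter_upwards [eventually_ge_atTop ({y} : Finset D)] with s hs
    exact hxs s y (hs (Finset.mem_singleton_self y))
  have hxC : x ∈ C := weak_closed hx hC hcl (Eventually.of_forall fun s => (hxsD s).1)
  have ineq1 : ∀ y ∈ C ∩ DL, 0 ≤ (L y + (χ - f)) (y - x) + Φ y - Φ x := by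
    intro y hy
    have hr : Tendsto (fun s => (L y - f) (y - xs s) + F (xs s) (y - x) + F x (x - xs s) + Φ y)
        U (𝓝 ((L y - f) (y - x) + χ (y - x) + F x (x - x) + Φ y)) := by
      simp only [map_sub (L y - f), map_sub (F x)]
      exact (((((hx (L y - f)).const_sub _).add (hχ (y - x))).add
        ((hx (F x)).const_sub _)).add_const _)
    have := weak_lsc hx hΦ hΦc hr (by
      filter_upwards [hev ⟨y, hy⟩] with s hs
      have h1 := hmon y hy.2 (xs s) (hxsD s).2
      have h2 := hFm x (xs s)
      simp only [hTdef, add_apply, sub_apply, map_sub] at hs h1 h2 ⊢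
      linarith)
    simp only [add_apply, sub_apply, map_sub] at this ⊢
    linarith
  obtain ⟨g, hg⟩ := sandwich h0 hlin hmon hC hi hΦ hΦc (χ - f) hxC ineq1
  have hxDL : x ∈ DL := by
    refine (hmax x g fun v hv => ?_).1
    have := hg v hv
    simp only [sub_apply, map_sub] at this ⊢
    linarith
  have ineq2 : ∀ y ∈ D, 0 ≤ T y (y - x) + Φ y - Φ x := by
    intro y hy
    have hr : Tendsto (fun s => T y (y - xs s) + Φ y) U (𝓝 (T y (y - x) + Φ y)) := by
      simp only [map_sub (T y)]
      exact ((hx (T y)).const_sub _).add_const _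
    have := weak_lsc hx hΦ hΦc hr (by
      filter_upwards [hev ⟨y, hy⟩] with s hs
      have h1 := hTm y hy (xs s) (hxsD s)
      simp only [sub_apply, map_sub] at hs h1 ⊢
      linarith)
    linarith
  exact ⟨x, ⟨hxC, hxDL⟩, minty_to_stamp hDc T hΦ hTh ⟨hxC, hxDL⟩ ineq2⟩

theorem psi_continuous {X Y : Type*} [NormedAddCommGroup X] [NormedSpace ℝ X]
    [NormedAddCommGroup Y] [NormedSpace ℝ Y] (S : QVISetting X Y) (hPsi : S.HPsi) (z : X) :
    Continuous (S.Psi z) := by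
  obtain ⟨-, ⟨η, b, hη, -, -, hb, hle, -⟩, -⟩ := hPsi
  rw [continuous_iff_continuousAt]
  intro x
  obtain ⟨c, hc⟩ := hb {z} (Metric.ball x 1) (Metric.ball x 1) isBounded_singleton
    Metric.isBounded_ball Metric.isBounded_ball
  have ht : Tendsto (fun y => c * ‖y - x‖ ^ η) (𝓝 x) (𝓝 0) := by
    have h : Continuous (fun y : X => c * ‖y - x‖ ^ η) :=
      continuous_const.mul ((by fun_prop : Continuous fun y : X => ‖y - x‖).rpow_const
        fun _ => Or.inr hη.le)
    simpa [Real.zero_rpow hη.ne'] using h.tendsto x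
  rw [ContinuousAt, tendsto_iff_dist_tendsto_zero]
  refine squeeze_zero' (Eventually.of_forall fun _ => dist_nonneg) ?_ ht
  filter_upwards [Metric.ball_mem_nhds x one_pos] with y hy
  have hx := Metric.mem_ball_self (x := x) one_pos
  have hn : 0 ≤ ‖y - x‖ ^ η := by positivity
  rw [Real.dist_eq, abs_le']
  constructor
  · exact (hle z y x).trans (mul_le_mul_of_nonneg_right (hc z rfl y hy x hx) hn)
  · have := (hle z x y).trans (mul_le_mul_of_nonneg_right (hc z rfl x hx y hy) (by positivity))
    rw [norm_sub_rev] at this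
    linarith

theorem sol2_nonempty {X Y : Type*} [NormedAddCommGroup X] [NormedSpace ℝ X]
    [NormedAddCommGroup Y] [NormedSpace ℝ Y]
    (hreflX : IsReflexiveSpace X) (S : QVISetting X Y)
    (hL : S.HL) (hM : S.HM) (hF : S.HF) (hPsi : S.HPsi) {z : X} (hz : z ∈ S.K)
    (ξ : Y →L[ℝ] ℝ) : (S.Sol2 z ξ).Nonempty := by
  have hΦc := psi_continuous S hPsi z
  have hΦ := (hPsi.1 z).1
  obtain ⟨g, hg⟩ := hPsi.2.2.2.1 z
  obtain ⟨h0, hlin, -, hmon, hmax⟩ := hL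
  obtain ⟨hFb, hFm, hFh, hp, hcF, hdF, hco⟩ := hF
  obtain ⟨-, hcl, hC, -⟩ := hM.1 z hz
  have hi : (0 : X) ∈ interior (S.M z) := interior_mono (biInter_subset_of_mem hz) hM.2.1
  set f : X →L[ℝ] ℝ := S.E - ξ.comp S.gam with hf
  obtain ⟨R, hR1, hR⟩ : ∃ R : ℝ, 1 ≤ R ∧ ‖f‖ + ‖g‖ + S.dF < S.cF * R ^ (S.p - 1) := by
    have h1 : Tendsto (fun R : ℝ => S.cF * R ^ (S.p - 1)) atTop atTop :=
      (tendsto_rpow_atTop (by linarith)).const_mul_atTop hcF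
    exact ((eventually_ge_atTop 1).and (h1.eventually_gt_atTop _)).exists
  have hRpos : 0 < R := by linarith
  have hDLc : Convex ℝ S.DL := fun u hu v hv a b _ _ _ => (hlin u hu v hv a b).1
  obtain ⟨R', hR'⟩ := (hFb _ (Metric.isBounded_closedBall (x := (0 : X)) (r := R))).exists_norm_le
  obtain ⟨x, ⟨⟨hxM, hxR⟩, hxD⟩, hx⟩ := exists_bdd hreflX h0 hlin hmon hmax
    (C := S.M z ∩ Metric.closedBall 0 R)
    (hC.inter (convex_closedBall 0 R)) (hcl.inter Metric.isClosed_closedBall)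
    (by
      rw [interior_inter]
      exact ⟨hi, mem_interior_iff_mem_nhds.2 (Metric.closedBall_mem_nhds 0 hRpos)⟩)
    (R := R) (fun y hy => mem_closedBall_zero_iff.1 hy.2)
    (F := S.F) (R' := R') (fun y hy => hR' _ ⟨y, hy.2, rfl⟩) hFm hFh f hΦ hΦc
  rw [mem_closedBall_zero_iff] at hxR
  have hxlt : ‖x‖ < R := by
    refine lt_of_le_of_ne hxR fun hEq => ?_
    have h1 := hx 0 ⟨⟨interior_subset hi, by simp [hRpos.le]⟩, h0⟩
    have hL0 : S.L 0 = 0 := by simpa using (hlin 0 h0 0 h0 0 0).2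
    have h2 := hmon x hxD 0 h0
    rw [hL0] at h2
    have h3 := hco x
    have h4 := hg x
    have h5 := (le_abs_self _).trans (f.le_opNorm x)
    have h6 := (neg_abs_le _).trans' (neg_le_neg (g.le_opNorm x))
    rw [hEq] at h3 h5 h6
    have h7 : R ^ S.p = R ^ (S.p - 1) * R := by
      rw [← Real.rpow_add_one hRpos.ne']; congr 1; ring
    rw [h7] at h3
    have h8 := mul_lt_mul_of_pos_right hR hRpos
    have h9 : S.dF ≤ S.dF * R := le_mul_of_one_le_right hdF hR1
    simp only [add_apply, sub_apply, map_neg, sub_zero, zero_sub] at h1 h2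
    linarith
  refine ⟨x, ⟨hxM, hxD⟩, fun y hy => ?_⟩
  -- a point on the segment inside the ball
  have hct : Tendsto (fun t : ℝ => ‖x + t • (y - x)‖) (𝓝[>] 0) (𝓝 ‖x‖) := by
    have : Continuous (fun t : ℝ => ‖x + t • (y - x)‖) := by fun_prop
    have := this.tendsto 0
    simp only [zero_smul, add_zero] at this
    exact this.mono_left nhdsWithin_le_nhds
  obtain ⟨t, ht, htR⟩ := ((Filter.eventually_mem_set.2
    (Ioo_mem_nhdsGT (zero_lt_one (α := ℝ)))).and (hct.eventually_lt_const hxlt)).exists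
  have h1 := hx (x + t • (y - x)) ⟨⟨hC.add_smul_sub_mem hxM hy.1 ⟨ht.1.le, ht.2.le⟩,
    mem_closedBall_zero_iff.2 htR.le⟩, hDLc.add_smul_sub_mem hxD hy.2 ⟨ht.1.le, ht.2.le⟩⟩
  have h3 := hΦ.2 (mem_univ x) (mem_univ y) (by linarith [ht.2] : 0 ≤ 1 - t) ht.1.le (by ring)
  have h4 : (1 - t) • x + t • y = x + t • (y - x) := by module
  rw [h4] at h3
  simp only [smul_eq_mul] at h3
  rw [add_sub_cancel_left, map_smul, smul_eq_mul] at h1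
  have h5 : 0 ≤ t * ((S.L x + S.F x - f) (y - x) + S.Psi z y - S.Psi z x) := by linarith
  have h6 := nonneg_of_mul_nonneg_right h5 ht.1
  simp only [hf, add_apply, sub_apply, ContinuousLinearMap.comp_apply] at h6
  linarith

/-- under the hypotheses of Statement 0, for every pair of
parameters `(z, ξ) ∈ K × Y*` the solution set `S(z, ξ)` of Problem 2 is
nonempty; moreover, if `F` is strictly monotone, then it is a singleton. -/
theorem statement2 {X Y : Type*} [NormedAddCommGroup X] [NormedSpace ℝ X]
    [NormedAddCommGroup Y] [NormedSpace ℝ Y] [CompleteSpace X] [CompleteSpace Y]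
    [TopologicalSpace.SeparableSpace X] [TopologicalSpace.SeparableSpace Y]
    (hreflX : IsReflexiveSpace X) (hreflY : IsReflexiveSpace Y)
    (S : QVISetting X Y)
    (hK : S.HK) (hL : S.HL) (hM : S.HM) (hF : S.HF) (hG : S.HG)
    (hgam : S.Hgam) (hPsi : S.HPsi)
    (hsmall : S.cG * ‖S.gam‖ ^ S.p < S.cF) :
    (∀ z ∈ S.K, ∀ ξ : Y →L[ℝ] ℝ, (S.Sol2 z ξ).Nonempty) ∧
    (S.StrictlyMonotoneF →
      ∀ z ∈ S.K, ∀ ξ : Y →L[ℝ] ℝ, ∃! x : X, x ∈ S.Sol2 z ξ) := by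
  have hne : ∀ z ∈ S.K, ∀ ξ : Y →L[ℝ] ℝ, (S.Sol2 z ξ).Nonempty := fun z hz ξ =>
    sol2_nonempty hreflX S hL hM hF hPsi hz ξ
  refine ⟨hne, fun hstrict z hz ξ => ?_⟩
  obtain ⟨x, hx⟩ := hne z hz ξ
  refine ⟨x, hx, fun x' hx' => ?_⟩
  by_contra hxx
  have h1 := hx.2 x' hx'.1
  have h2 := hx'.2 x hx.1
  have h3 := hstrict x' x hxx
  have h4 := hL.2.2.2.1 x' hx'.1.2 x hx.1.2
  simp only [sub_apply, map_sub] at h1 h2 h3 h4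
  linarith
end
end

section
/- Under hypotheses H(M), H(F), H(G), H(γ), H(Ψ), E ∈ X*, the smallness condition c_F > c_G‖γ‖^p, and assuming additionally that F is strictly monotone (so that the solution map S of Problem 2 is single-valued), the map S : K × Y* → K ∩ W is bounded: it maps bounded subsets of K × Y* (with the norm ‖z‖_X + ‖ξ‖_{Y*}) to bounded subsets of W (with the graph norm ‖x‖_W = ‖x‖_X + ‖Lx‖_{X*}). -/
open Filter Topology Bornology Set

noncomputable section

/-- A `p`-power bounded by lower order terms forces a bound. -/
theorem aux_rpow_bound (p β c A B D : ℝ) (hc : 0 < c) (hA : 0 ≤ A) (hD : 0 ≤ D)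
    (hβ : 1 ≤ β) (hβp : β < p) :
    ∃ R : ℝ, 1 ≤ R ∧ ∀ t : ℝ, 0 ≤ t → c * t ^ p ≤ A * t + B * t ^ β + D → t ≤ R := by
  have h := (tendsto_rpow_atTop (sub_pos.2 hβp)).eventually_gt_atTop ((A + B + D) / c)
  obtain ⟨R, hR⟩ := eventually_atTop.1 h
  refine ⟨max R 1, le_max_right _ _, fun t _ h1 => ?_⟩
  by_contra! hlt
  have ht1 : 1 < t := lt_of_le_of_lt (le_max_right _ _) hlt
  have htR : R ≤ t := (lt_of_le_of_lt (le_max_left _ _) hlt).le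
  have h2 := hR t htR
  rw [div_lt_iff₀ hc] at h2
  have htp : 0 < t := by linarith
  have hb : 0 < t ^ β := Real.rpow_pos_of_pos htp β
  have h3 : t ^ p = t ^ (p - β) * t ^ β := by
    rw [← Real.rpow_add htp]; congr 1; ring
  have h4 : t ≤ t ^ β := by
    simpa using Real.rpow_le_rpow_of_exponent_le ht1.le hβ
  have h5 : A * t ≤ A * t ^ β := mul_le_mul_of_nonneg_left h4 hA
  have h6 : D * 1 ≤ D * t ^ β := mul_le_mul_of_nonneg_left (by linarith) hD
  have h7 := mul_lt_mul_of_pos_right h2 hb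
  rw [h3] at h1
  nlinarith

/-- A functional bounded below on a dense part of a ball is norm bounded. -/
theorem aux_norm_bound {V : Type*} [NormedAddCommGroup V] [NormedSpace ℝ V]
    (f : V →L[ℝ] ℝ) (D : Set V) (hD : Dense D) (δ C : ℝ) (hδ : 0 < δ)
    (h : ∀ y ∈ Metric.ball (0 : V) δ ∩ D, -f y ≤ C) : ‖f‖ ≤ 2 * C / δ := by
  have hball : ∀ y ∈ Metric.ball (0 : V) δ, -f y ≤ C := by
    intro y hy
    have h1 := hD.open_subset_closure_inter Metric.isOpen_ball hy
    have h2 : IsClosed {y : V | -f y ≤ C} :=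
      isClosed_le (by fun_prop) continuous_const
    exact closure_minimal h h2 h1
  have hC : 0 ≤ C := by simpa using hball 0 (Metric.mem_ball_self hδ)
  refine f.opNorm_le_bound (by positivity) fun v => ?_
  rcases eq_or_ne v 0 with rfl | hv
  · simp
  have hv' : 0 < ‖v‖ := norm_pos_iff.2 hv
  have key : ∀ s : ℝ, |s| = 1 → -(s * f v) ≤ 2 * C / δ * ‖v‖ := by
    intro s hs
    have h1 := hball ((s * (δ / (2 * ‖v‖))) • v) (by
      rw [mem_ball_zero_iff, norm_smul, norm_mul, Real.norm_eq_abs, hs, Real.norm_eq_abs,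
        abs_of_pos (by positivity)]
      field_simp
      linarith)
    rw [map_smul, smul_eq_mul] at h1
    have h2 : -(s * (δ / (2 * ‖v‖)) * f v) = -(s * f v) * (δ / (2 * ‖v‖)) := by ring
    rw [h2, ← le_div_iff₀ (by positivity)] at h1
    refine h1.trans (le_of_eq ?_)
    field_simp
  rw [Real.norm_eq_abs, abs_le]
  have h1 := key 1 (by simp)
  have h2 := key (-1) (by simp)
  constructor <;> linarith

/-- under the hypotheses of Statement 0 and strict monotonicity
of `F` (so the solution map `Ssol` of Problem 2 is single-valued), `Ssol` maps
bounded subsets of `K × Y*` to bounded subsets of `W` (graph norm). -/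
theorem statement3 {X Y : Type*} [NormedAddCommGroup X] [NormedSpace ℝ X]
    [NormedAddCommGroup Y] [NormedSpace ℝ Y] [CompleteSpace X] [CompleteSpace Y]
    [TopologicalSpace.SeparableSpace X] [TopologicalSpace.SeparableSpace Y]
    (hreflX : IsReflexiveSpace X) (hreflY : IsReflexiveSpace Y)
    (S : QVISetting X Y)
    (hK : S.HK) (hL : S.HL) (hM : S.HM) (hF : S.HF) (hG : S.HG)
    (hgam : S.Hgam) (hPsi : S.HPsi)
    (hsmall : S.cG * ‖S.gam‖ ^ S.p < S.cF)
    (hstrict : S.StrictlyMonotoneF)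
    (Ssol : X → (Y →L[ℝ] ℝ) → X)
    (hSsol : ∀ z ∈ S.K, ∀ ξ : Y →L[ℝ] ℝ, S.Sol2 z ξ = {Ssol z ξ}) :
    ∀ r : ℝ, ∃ R : ℝ, ∀ z ∈ S.K, ∀ ξ : Y →L[ℝ] ℝ, ‖z‖ + ‖ξ‖ ≤ r →
      ‖Ssol z ξ‖ + ‖S.L (Ssol z ξ)‖ ≤ R := by
  intro r
  obtain ⟨h0, hlin, hdense, hmono, -⟩ := hL
  obtain ⟨-, hint, -, -⟩ := hM
  obtain ⟨hFb, -, -, -, hcF, hdF, hFc⟩ := hF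
  obtain ⟨-, ⟨η, b, hη, -, hb0, hbb, hbP, -⟩, -, -, ⟨he, hPe⟩, hcP, hdP, hβ, hβp, hPl⟩ := hPsi
  have hL0 : S.L 0 = 0 := by
    have := (hlin 0 h0 0 h0 0 0).2
    simpa using this
  rw [mem_interior_iff_mem_nhds, Metric.mem_nhds_iff] at hint
  obtain ⟨δ, hδ, hball⟩ := hint
  by_cases hr : 0 ≤ r
  swap
  · refine ⟨0, fun z _ ξ h => ?_⟩
    have := norm_nonneg z
    have := norm_nonneg ξ
    linarith
  obtain ⟨R1, hR1, hR1b⟩ := aux_rpow_bound S.p S.beta S.cF (‖S.E‖ + r * ‖S.gam‖) S.cPsi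
    (S.ePsi + S.dPsi + S.dF) hcF (by positivity) (by positivity) hβ hβp
  obtain ⟨CF, hCF⟩ := (hFb (Metric.closedBall 0 R1) Metric.isBounded_closedBall).exists_norm_le
  obtain ⟨Cb, hCb⟩ := hbb (Metric.closedBall 0 r) (Metric.closedBall 0 δ)
    (Metric.closedBall 0 R1) Metric.isBounded_closedBall Metric.isBounded_closedBall
    Metric.isBounded_closedBall
  set C : ℝ := (CF + ‖S.E‖ + r * ‖S.gam‖) * (δ + R1) + Cb * (δ + R1) ^ η with hC
  refine ⟨R1 + 2 * C / δ, fun z hz ξ hzξ => ?_⟩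
  have hzr : ‖z‖ ≤ r := by linarith [norm_nonneg ξ]
  have hξr : ‖ξ‖ ≤ r := by linarith [norm_nonneg z]
  have hsol : Ssol z ξ ∈ S.Sol2 z ξ := by rw [hSsol z hz ξ]; rfl
  generalize Ssol z ξ = x at hsol
  obtain ⟨⟨hxM, hxD⟩, hx⟩ := hsol
  have hMz : Metric.ball (0 : X) δ ⊆ S.M z := fun y hy => by
    have := hball hy
    simp only [mem_iInter] at this
    exact this z hz
  have hLx : 0 ≤ S.L x x := by simpa [hL0] using hmono x hxD 0 h0
  have hξγ : ∀ v : X, |ξ (S.gam v)| ≤ r * ‖S.gam‖ * ‖v‖ := fun v => by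
    calc |ξ (S.gam v)| ≤ ‖ξ‖ * ‖S.gam v‖ := ξ.le_opNorm _
      _ ≤ r * (‖S.gam‖ * ‖v‖) := by gcongr; exact S.gam.le_opNorm v
      _ = _ := by ring
  have hE : ∀ v : X, |S.E v| ≤ ‖S.E‖ * ‖v‖ := fun v => S.E.le_opNorm v
  have hxR : ‖x‖ ≤ R1 := by
    apply hR1b _ (norm_nonneg x)
    have h1 := hx 0 ⟨hMz (Metric.mem_ball_self hδ), h0⟩
    simp only [zero_sub, map_neg] at h1
    have h2 := hFc x
    have h3 := abs_le.1 (hξγ x)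
    have h4 := abs_le.1 (hE x)
    have h5 := abs_le.1 (hPe z)
    have h6 := hPl z x
    linarith [h3.1, h3.2, h4.1, h4.2, h5.1, h5.2]
  have hFx : ‖S.F x‖ ≤ CF := hCF _ ⟨x, by simpa using hxR, rfl⟩
  have hLn : ‖S.L x‖ ≤ 2 * C / δ := by
    apply aux_norm_bound (S.L x) S.DL hdense δ C hδ
    rintro y ⟨hyb, hyD⟩
    have h1 := hx y ⟨hMz hyb, hyD⟩
    have hyδ : ‖y‖ ≤ δ := (mem_ball_zero_iff.1 hyb).le
    have hyx : ‖y - x‖ ≤ δ + R1 := (norm_sub_le _ _).trans (by linarith)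
    have h2 := hbP z y x
    have h3 := hCb z (by simpa using hzr) y (by simpa using hyδ) x (by simpa using hxR)
    have h4 : b z y x * ‖y - x‖ ^ η ≤ Cb * (δ + R1) ^ η :=
      mul_le_mul h3 (Real.rpow_le_rpow (norm_nonneg _) hyx hη.le) (by positivity)
        ((hb0 _ _ _).trans h3)
    have h5 : |S.F x (y - x)| ≤ CF * (δ + R1) :=
      ((S.F x).le_opNorm _).trans
        (mul_le_mul hFx hyx (norm_nonneg _) ((norm_nonneg _).trans hFx))
    have h6 : |S.E (y - x)| ≤ ‖S.E‖ * (δ + R1) := (hE _).trans (by gcongr)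
    have h7 : |ξ (S.gam (y - x))| ≤ r * ‖S.gam‖ * (δ + R1) := (hξγ _).trans (by gcongr)
    have h8 : S.L x (y - x) = S.L x y - S.L x x := map_sub _ _ _
    have h5' := abs_le.1 h5
    have h6' := abs_le.1 h6
    have h7' := abs_le.1 h7
    have hCe : C = CF * (δ + R1) + ‖S.E‖ * (δ + R1) + r * ‖S.gam‖ * (δ + R1)
      + Cb * (δ + R1) ^ η := by rw [hC]; ring
    rw [hCe]
    linarith [h5'.2, h6'.1, h7'.2]
  linarith
end
end

section
/- Under hypotheses H(M), H(F), H(G), H(γ), H(Ψ), E ∈ X*, the smallness condition c_F > c_G‖γ‖^p, and assuming additionally that F is strictly monotone (so that the solution map S of Problem 2 is single-valued), there exists a constant c₀ > 0 such that ‖S(z,ξ)‖_X ≤ c₀ for every z ∈ K with ‖z‖_X ≤ c₀ and every ξ ∈ G(γz). -/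
open Filter Topology Bornology Set

noncomputable section

open Asymptotics in
theorem rpow_isLittleO_rpow_aux {a b : ℝ} (hab : a < b) :
    (fun t : ℝ => t ^ a) =o[atTop] (fun t : ℝ => t ^ b) := by
  rw [Asymptotics.isLittleO_iff_tendsto']
  · refine (tendsto_rpow_neg_atTop (sub_pos.2 hab)).congr' ?_
    filter_upwards [eventually_gt_atTop 0] with t ht
    rw [← Real.rpow_sub ht, neg_sub]
  · filter_upwards [eventually_gt_atTop 0] with t ht h
    exact absurd h (ne_of_gt (Real.rpow_pos_of_pos ht b))

/-- under the hypotheses of Statement 0 and strict monotonicity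
of `F`, there is a constant `c₀ > 0` such that `‖S(z, ξ)‖_X ≤ c₀` for every
`z ∈ K` with `‖z‖_X ≤ c₀` and every `ξ ∈ G(γ z)`. -/
theorem statement4 {X Y : Type*} [NormedAddCommGroup X] [NormedSpace ℝ X]
    [NormedAddCommGroup Y] [NormedSpace ℝ Y] [CompleteSpace X] [CompleteSpace Y]
    [TopologicalSpace.SeparableSpace X] [TopologicalSpace.SeparableSpace Y]
    (hreflX : IsReflexiveSpace X) (hreflY : IsReflexiveSpace Y)
    (S : QVISetting X Y)
    (hK : S.HK) (hL : S.HL) (hM : S.HM) (hF : S.HF) (hG : S.HG)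
    (hgam : S.Hgam) (hPsi : S.HPsi)
    (hsmall : S.cG * ‖S.gam‖ ^ S.p < S.cF)
    (hstrict : S.StrictlyMonotoneF)
    (Ssol : X → (Y →L[ℝ] ℝ) → X)
    (hSsol : ∀ z ∈ S.K, ∀ ξ : Y →L[ℝ] ℝ, S.Sol2 z ξ = {Ssol z ξ}) :
    ∃ c₀ : ℝ, 0 < c₀ ∧ ∀ z ∈ S.K, ‖z‖ ≤ c₀ →
      ∀ ξ ∈ S.G (S.gam z), ‖Ssol z ξ‖ ≤ c₀ := by
  obtain ⟨h0, hlin, -, hmono, -⟩ := hL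
  obtain ⟨-, hint, -, -⟩ := hM
  obtain ⟨-, -, -, hp, hcF, hdF, hcoer⟩ := hF
  obtain ⟨-, -, hcG, hdG, hgrow⟩ := hG
  obtain ⟨-, -, -, -, ⟨-, hePsi⟩, hcPsi, hdPsi, hb1, hbp, hlow⟩ := hPsi
  have hL0 : S.L 0 = 0 := by
    have := (hlin 0 h0 0 h0 0 0).2
    simpa using this
  set A : ℝ := ‖S.E‖ + S.dG * ‖S.gam‖ with hA
  set C : ℝ := S.dPsi + S.ePsi + S.dF with hC
  set δ : ℝ := S.cF - S.cG * ‖S.gam‖ ^ S.p with hδ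
  have hδ0 : 0 < δ := by rw [hδ]; linarith
  -- the dominating power wins
  have hev : ∀ᶠ t : ℝ in atTop, A * t + S.cPsi * t ^ S.beta + C < δ * t ^ S.p := by
    have e1 : (fun t : ℝ => t ^ (1 : ℝ)) =o[atTop] (fun t : ℝ => t ^ S.p) :=
      rpow_isLittleO_rpow_aux hp
    have e2 : (fun t : ℝ => t ^ S.beta) =o[atTop] (fun t : ℝ => t ^ S.p) :=
      rpow_isLittleO_rpow_aux hbp
    have e3 : (fun t : ℝ => t ^ (0 : ℝ)) =o[atTop] (fun t : ℝ => t ^ S.p) :=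
      rpow_isLittleO_rpow_aux (by linarith)
    have e := ((e1.const_mul_left A).add (e2.const_mul_left S.cPsi)).add (e3.const_mul_left C)
    filter_upwards [e.def (half_pos hδ0), eventually_gt_atTop 0] with t ht ht0
    have hpos : 0 < t ^ S.p := Real.rpow_pos_of_pos ht0 _
    rw [Real.norm_eq_abs, Real.norm_eq_abs, abs_of_pos hpos] at ht
    have h1 := (le_abs_self _).trans ht
    rw [Real.rpow_one, Real.rpow_zero] at h1
    nlinarith
  obtain ⟨R₀, hR₀⟩ := eventually_atTop.1 hev
  refine ⟨max R₀ 1, by positivity, ?_⟩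
  set R := max R₀ 1 with hR
  have hRpos : 0 < R := lt_of_lt_of_le one_pos (le_max_right _ _)
  intro z hz hzR ξ hξ
  by_contra! hlt
  have hmem : Ssol z ξ ∈ S.Sol2 z ξ := by rw [hSsol z hz ξ]; rfl
  generalize Ssol z ξ = x at hmem hlt
  obtain ⟨⟨-, hxD⟩, hineq⟩ := hmem
  have h0M : (0 : X) ∈ S.M z := by
    have := interior_subset hint
    exact Set.mem_iInter₂.1 this z hz
  have h1 := hineq 0 ⟨h0M, h0⟩
  have hLx : 0 ≤ S.L x x := by
    have := hmono x hxD 0 h0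
    simpa [hL0] using this
  simp only [zero_sub, map_neg] at h1
  have h2 := hcoer x
  have h3 := hlow z x
  have h4 := (abs_le.1 (hePsi z)).2
  have h5 : S.E x ≤ ‖S.E‖ * ‖x‖ := (le_abs_self _).trans (S.E.le_opNorm x)
  have hxpos : 0 < ‖x‖ := hRpos.trans hlt
  have h6 : -ξ (S.gam x) ≤ (S.cG * ‖S.gam z‖ ^ (S.p - 1) + S.dG) * (‖S.gam‖ * ‖x‖) :=
    calc -ξ (S.gam x) ≤ ‖ξ (S.gam x)‖ := neg_le_abs _
      _ ≤ ‖ξ‖ * ‖S.gam x‖ := ξ.le_opNorm _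
      _ ≤ _ := mul_le_mul (hgrow _ _ hξ) (S.gam.le_opNorm x) (norm_nonneg _) (by positivity)
  have h7 : ‖S.gam z‖ ^ (S.p - 1) ≤ ‖S.gam‖ ^ (S.p - 1) * ‖x‖ ^ (S.p - 1) := by
    rw [← Real.mul_rpow (norm_nonneg _) (norm_nonneg _)]
    refine Real.rpow_le_rpow (norm_nonneg _) ?_ (by linarith)
    exact (S.gam.le_opNorm z).trans
      (mul_le_mul_of_nonneg_left (hzR.trans hlt.le) (norm_nonneg _))
  have hpow : ∀ a : ℝ, 0 ≤ a → a ^ (S.p - 1) * a = a ^ S.p := by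
    intro a ha
    rw [← Real.rpow_add_one' ha (by linarith), sub_add_cancel]
  have h8 : S.cG * ‖S.gam z‖ ^ (S.p - 1) * (‖S.gam‖ * ‖x‖)
      ≤ S.cG * ‖S.gam‖ ^ S.p * ‖x‖ ^ S.p := by
    rw [← hpow _ (norm_nonneg S.gam), ← hpow _ (norm_nonneg x)]
    calc _ ≤ S.cG * (‖S.gam‖ ^ (S.p - 1) * ‖x‖ ^ (S.p - 1)) * (‖S.gam‖ * ‖x‖) := by gcongr
      _ = _ := by ring
  have h9 := hR₀ ‖x‖ ((le_max_left _ _).trans hlt.le)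
  rw [hA, hC, hδ] at h9
  linarith
end
end

section
/- Under hypotheses H(M), H(F), H(G), H(γ), H(Ψ), E ∈ X*, the smallness condition c_F > c_G‖γ‖^p, and assuming additionally that F is strictly monotone (so that the solution map S of Problem 2 is single-valued), there exist constants c₀, c₂, c₅ > 0 such that, setting D₁ = {x ∈ K ∩ D(L) : ‖x‖_X ≤ c₀ and ‖Lx‖_{X*} ≤ c₅} and D₂ = {ξ ∈ Y* : ‖ξ‖_{Y*} ≤ c₂}, the multivalued map Q(z,ξ) = {S(z,ξ)} × G(γz) maps D₁ × D₂ into itself: for every (z,ξ) ∈ D₁ × D₂ one has S(z,ξ) ∈ D₁ and G(γz) ⊆ D₂. -/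
open Filter Topology Bornology Set

noncomputable section

theorem aux_large (p beta A B D δ : ℝ) (hp : 1 < p) (hb : beta < p)
    (hA : 0 ≤ A) (hB : 0 ≤ B) (hD : 0 ≤ D) (hδ : 0 < δ) :
    ∃ R : ℝ, 1 ≤ R ∧ ∀ t : ℝ, R ≤ t → A + B * t ^ beta + D * t < δ * t ^ p := by
  set q := max beta 1 with hq
  have hqp : 0 < p - q := by
    have : q < p := max_lt hb hp
    linarith
  have h1 := (tendsto_rpow_atTop hqp).eventually_gt_atTop ((A + B + D) / δ)
  obtain ⟨R, hR⟩ := eventually_atTop.1 h1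
  refine ⟨max R 1, le_max_right _ _, fun t ht => ?_⟩
  have ht1 : 1 ≤ t := (le_max_right _ _).trans ht
  have ht0 : 0 < t := by linarith
  have h2 := hR t ((le_max_left _ _).trans ht)
  rw [div_lt_iff₀ hδ] at h2
  have e1 : t ^ beta ≤ t ^ q := Real.rpow_le_rpow_of_exponent_le ht1 (le_max_left _ _)
  have e2 : t ≤ t ^ q := by
    have := Real.rpow_le_rpow_of_exponent_le ht1 (le_max_right beta 1)
    rwa [Real.rpow_one] at this
  have e3 : 1 ≤ t ^ q := ht1.trans e2
  have e4 : t ^ p = t ^ (p - q) * t ^ q := by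
    rw [← Real.rpow_add ht0]; congr 1; ring
  have e5 : 0 < t ^ q := by linarith
  rw [e4]
  have f1 := mul_le_mul_of_nonneg_left e1 hB
  have f2 := mul_le_mul_of_nonneg_left e2 hD
  have f3 := mul_le_mul_of_nonneg_left e3 hA
  have f4 := mul_lt_mul_of_pos_right h2 e5
  nlinarith

theorem aux_norm {X : Type*} [NormedAddCommGroup X] [NormedSpace ℝ X]
    (f : X →L[ℝ] ℝ) (D : Set X) (hD : Dense D) (r C : ℝ) (hr : 0 < r) (hC : 0 ≤ C)
    (h : ∀ v ∈ D, ‖v‖ < r → -C ≤ f v) : ‖f‖ ≤ 2 * C / r := by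
  have h1 : ∀ v, ‖v‖ < r → -C ≤ f v := by
    have hcl : IsClosed {v : X | -C ≤ f v} := isClosed_le continuous_const f.continuous
    intro v hv
    have hsub := hD.open_subset_closure_inter (t := Metric.ball (0 : X) r) Metric.isOpen_ball
    have hv' : v ∈ closure (Metric.ball (0 : X) r ∩ D) := hsub (by simpa using hv)
    have : closure (Metric.ball (0 : X) r ∩ D) ⊆ {v : X | -C ≤ f v} :=
      hcl.closure_subset_iff.2 (fun w hw => h w hw.2 (by simpa using hw.1))
    exact this hv'
  have h2 : ∀ v, ‖v‖ < r → |f v| ≤ C := by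
    intro v hv
    refine abs_le.2 ⟨h1 v hv, ?_⟩
    have := h1 (-v) (by simpa using hv)
    rw [map_neg] at this
    linarith
  refine f.opNorm_le_bound (by positivity) (fun w => ?_)
  rcases eq_or_ne w 0 with rfl | hw
  · simp
  have hw0 : 0 < ‖w‖ := norm_pos_iff.2 hw
  have hs : 0 < r / (2 * ‖w‖) := by positivity
  have h3 := h2 ((r / (2 * ‖w‖)) • w) (by
    rw [norm_smul, Real.norm_of_nonneg hs.le]
    have : r / (2 * ‖w‖) * ‖w‖ = r / 2 := by field_simp
    linarith)
  rw [map_smul, smul_eq_mul, abs_mul, abs_of_pos hs] at h3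
  rw [Real.norm_eq_abs]
  rw [div_mul_eq_mul_div, div_le_iff₀ (by positivity)] at h3
  rw [div_mul_eq_mul_div, le_div_iff₀ hr]
  linarith

theorem aux_le {X : Type*} [NormedAddCommGroup X] [NormedSpace ℝ X]
    (f : X →L[ℝ] ℝ) (x : X) (a b : ℝ) (ha : ‖f‖ ≤ a) (hb : ‖x‖ ≤ b) : |f x| ≤ a * b := by
  have := f.le_opNorm x
  rw [Real.norm_eq_abs] at this
  exact this.trans (mul_le_mul ha hb (norm_nonneg _) ((norm_nonneg _).trans ha))

/-- under the hypotheses of Statement 0 and strict monotonicity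
of `F`, there are constants `c₀, c₂, c₅ > 0` such that the multivalued map
`Q(z, ξ) = {S(z, ξ)} × G(γ z)` maps `D₁ × D₂` into itself, where
`D₁ = {x ∈ K ∩ D(L) : ‖x‖_X ≤ c₀, ‖Lx‖_{X*} ≤ c₅}` and
`D₂ = {ξ ∈ Y* : ‖ξ‖_{Y*} ≤ c₂}`. -/
theorem statement5 {X Y : Type*} [NormedAddCommGroup X] [NormedSpace ℝ X]
    [NormedAddCommGroup Y] [NormedSpace ℝ Y] [CompleteSpace X] [CompleteSpace Y]
    [TopologicalSpace.SeparableSpace X] [TopologicalSpace.SeparableSpace Y]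
    (hreflX : IsReflexiveSpace X) (hreflY : IsReflexiveSpace Y)
    (S : QVISetting X Y)
    (hK : S.HK) (hL : S.HL) (hM : S.HM) (hF : S.HF) (hG : S.HG)
    (hgam : S.Hgam) (hPsi : S.HPsi)
    (hsmall : S.cG * ‖S.gam‖ ^ S.p < S.cF)
    (hstrict : S.StrictlyMonotoneF)
    (Ssol : X → (Y →L[ℝ] ℝ) → X)
    (hSsol : ∀ z ∈ S.K, ∀ ξ : Y →L[ℝ] ℝ, S.Sol2 z ξ = {Ssol z ξ}) :
    ∃ c₀ c₂ c₅ : ℝ, 0 < c₀ ∧ 0 < c₂ ∧ 0 < c₅ ∧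
      ∀ z ∈ S.K ∩ S.DL, ‖z‖ ≤ c₀ → ‖S.L z‖ ≤ c₅ →
        (∀ ξ : Y →L[ℝ] ℝ, ‖ξ‖ ≤ c₂ →
          Ssol z ξ ∈ S.K ∩ S.DL ∧ ‖Ssol z ξ‖ ≤ c₀ ∧ ‖S.L (Ssol z ξ)‖ ≤ c₅) ∧
        (∀ η ∈ S.G (S.gam z), ‖η‖ ≤ c₂) := by
  obtain ⟨h0D, hlin, hdense, hmon, -⟩ := hL
  obtain ⟨hM1, hM0, -, -⟩ := hM
  obtain ⟨hFb, -, -, hp, hcF, hdF, hcoer⟩ := hF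
  obtain ⟨-, -, hcG, hdG, hgrow⟩ := hG
  obtain ⟨-, ⟨η, b, hη, -, hb0, hbb, hbP, -⟩, -, -, ⟨he0, hePsi⟩, hcP, hdP, hbeta1, hbeta, hlow⟩ := hPsi
  have hL0 : S.L 0 = 0 := by
    have := (hlin 0 h0D 0 h0D 0 0).2
    simpa using this
  have hLpos : ∀ x ∈ S.DL, 0 ≤ S.L x x := by
    intro x hx
    have := hmon x hx 0 h0D
    simpa [hL0] using this
  obtain ⟨r, hr, hball⟩ := Metric.mem_nhds_iff.1 (mem_interior_iff_mem_nhds.1 hM0)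
  have hballM : ∀ z ∈ S.K, ∀ v : X, ‖v‖ < r → v ∈ S.M z := by
    intro z hz v hv
    have := hball (show v ∈ Metric.ball (0 : X) r by simpa using hv)
    exact (Set.mem_iInter₂.1 this) z hz
  set g := ‖S.gam‖ with hg
  have hg0 : 0 ≤ g := norm_nonneg _
  obtain ⟨c₀, hc01, hc0⟩ := aux_large S.p S.beta (S.dF + S.ePsi + S.dPsi) S.cPsi
    (‖S.E‖ + (S.dG + 1) * g) (S.cF - S.cG * g ^ S.p) hp hbeta (by positivity) hcP
    (by positivity) (by linarith)
  have hc0p : 0 < c₀ := by linarith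
  set c₂ := S.cG * (g * c₀) ^ (S.p - 1) + S.dG + 1 with hc2
  have hc2p : 0 < c₂ := by positivity
  obtain ⟨CF, hCF⟩ := (hFb _ (Metric.isBounded_closedBall (x := (0 : X)) (r := c₀))).exists_norm_le
  have hCF' : ∀ x : X, ‖x‖ ≤ c₀ → ‖S.F x‖ ≤ CF := fun x hx =>
    hCF _ ⟨x, by simpa using hx, rfl⟩
  have hCF0 : 0 ≤ CF := (norm_nonneg _).trans (hCF' 0 (by simpa using hc0p.le))
  obtain ⟨Cb, hCb⟩ := hbb (Metric.closedBall 0 c₀) (Metric.closedBall 0 r) {0}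
    Metric.isBounded_closedBall Metric.isBounded_closedBall Bornology.isBounded_singleton
  have hCb0 : 0 ≤ Cb := (hb0 0 0 0).trans (hCb 0 (by simpa using hc0p.le) 0 (by simpa using hr.le) 0 rfl)
  set C := S.cPsi * c₀ ^ S.beta + S.dPsi + S.ePsi + Cb * r ^ η + CF * (r + c₀)
    + ‖S.E‖ * (r + c₀) + c₂ * (g * (r + c₀)) with hC
  have hCnn : 0 ≤ C := by positivity
  refine ⟨c₀, c₂, 2 * C / r + 1, hc0p, hc2p, by positivity, ?_⟩
  rintro z ⟨hzK, hzD⟩ hzn -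
  refine ⟨fun ξ hξ => ?_, fun ζ hζ => ?_⟩
  · have hsol : Ssol z ξ ∈ S.Sol2 z ξ := by rw [hSsol z hzK ξ]; rfl
    set x := Ssol z ξ with hx
    obtain ⟨⟨hxM, hxD⟩, hineq⟩ := hsol
    have hxn : ‖x‖ ≤ c₀ := by
      by_contra hcon
      push Not at hcon
      have hxp : 0 < ‖x‖ := hc0p.trans hcon
      have h1 := hineq 0 ⟨hballM z hzK 0 (by simpa using hr), h0D⟩
      simp only [zero_sub, map_neg] at h1
      have h2 := hcoer x
      have h3 := hLpos x hxD
      have h4 := (abs_le.1 (hePsi z)).2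
      have h5 := hlow z x
      have h6 := (abs_le.1 (aux_le S.E x _ _ le_rfl le_rfl)).2
      have h7 := (abs_le.1 (aux_le ξ (S.gam x) _ _ hξ (S.gam.le_opNorm x))).1
      have h8 := hc0 ‖x‖ hcon.le
      have h9 : c₀ ^ (S.p - 1) * ‖x‖ ≤ ‖x‖ ^ S.p := by
        have e : ‖x‖ ^ S.p = ‖x‖ ^ (S.p - 1) * ‖x‖ := by
          rw [Real.rpow_sub_one hxp.ne']; field_simp
        rw [e]
        exact mul_le_mul_of_nonneg_right
          (Real.rpow_le_rpow hc0p.le hcon.le (by linarith)) hxp.le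
      have h10 : (g * c₀) ^ (S.p - 1) * g = g ^ S.p * c₀ ^ (S.p - 1) := by
        have e : g ^ S.p = g ^ (S.p - 1) * g := by
          rcases hg0.eq_or_lt with h | h
          · rw [← h, Real.zero_rpow (by linarith), mul_zero]
          · rw [Real.rpow_sub_one h.ne']; field_simp
        rw [Real.mul_rpow hg0 hc0p.le, e]; ring
      have h11 : c₂ * (g * ‖x‖) ≤ S.cG * g ^ S.p * ‖x‖ ^ S.p + (S.dG + 1) * g * ‖x‖ := by
        have e : c₂ * (g * ‖x‖) = S.cG * g ^ S.p * (c₀ ^ (S.p - 1) * ‖x‖)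
            + (S.dG + 1) * g * ‖x‖ := by
          rw [hc2]; linear_combination S.cG * ‖x‖ * h10
        rw [e]
        have := mul_le_mul_of_nonneg_left h9 (show 0 ≤ S.cG * g ^ S.p by positivity)
        linarith
      linarith
    refine ⟨⟨(hM1 z hzK).2.2.2 hxM, hxD⟩, hxn, ?_⟩
    have := aux_norm (S.L x) S.DL hdense r C hr hCnn ?_
    · linarith
    intro v hvD hvr
    have h1 := hineq v ⟨hballM z hzK v hvr, hvD⟩
    have hvx : ‖v - x‖ ≤ r + c₀ := (norm_sub_le _ _).trans (by linarith)
    have h2 := (abs_le.1 (aux_le (S.F x) (v - x) _ _ (hCF' x hxn) hvx)).2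
    have h3 := (abs_le.1 (aux_le S.E (v - x) _ _ le_rfl hvx)).1
    have h4 := (abs_le.1 (aux_le ξ (S.gam (v - x)) _ (g * (r + c₀)) hξ
      ((S.gam.le_opNorm _).trans (mul_le_mul_of_nonneg_left hvx hg0)))).2
    have h5 := hLpos x hxD
    have h6 := hlow z x
    have h7 : S.cPsi * ‖x‖ ^ S.beta ≤ S.cPsi * c₀ ^ S.beta :=
      mul_le_mul_of_nonneg_left (Real.rpow_le_rpow (norm_nonneg _) hxn (by linarith)) hcP
    have h8 := hbP z v 0
    rw [sub_zero] at h8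
    have h9 : b z v 0 * ‖v‖ ^ η ≤ Cb * r ^ η :=
      mul_le_mul (hCb z (by simpa using hzn) v (by simpa using hvr.le) 0 rfl)
        (Real.rpow_le_rpow (norm_nonneg _) hvr.le hη.le) (by positivity) hCb0
    have h10 := (abs_le.1 (hePsi z)).2
    have h11 : S.L x (v - x) = S.L x v - S.L x x := map_sub _ _ _
    linarith
  · have h1 := hgrow _ ζ hζ
    have h2 : ‖S.gam z‖ ≤ g * c₀ :=
      (S.gam.le_opNorm z).trans (mul_le_mul_of_nonneg_left hzn hg0)
    have h3 := mul_le_mul_of_nonneg_left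
      (Real.rpow_le_rpow (norm_nonneg _) h2 (show 0 ≤ S.p - 1 by linarith)) hcG
    linarith
end
end
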